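/- Let ρ ∈ (0,1) and c ∈ L^∞(B_ρ(e₁)). Suppose u ∈ C^{2s+α}(B_ρ(e₁)) ∩ 𝒜_s(ℝⁿ) for some α > 0 with 2s+α not an integer, u ≥ 0 in ℝⁿ₊, and (−Δ)^s u + c·u = 0 pointwise in B_ρ(e₁). Then there exists C_ρ ≥ 1, depending only on n, s, ‖c‖_{L^∞(B_ρ(e₁))} and ρ, such that sup_{B_{ρ/2}(e₁)} u ≤ C_ρ · inf_{B_{ρ/2}(e₁)} u, and moreover C_ρ⁻¹‖u‖_{𝒜_s(ℝⁿ)} ≤ inf_{B_{ρ/2}(e₁)} u ≤ sup_{B_{ρ/2}(e₁)} u ≤ C_ρ‖u‖_{𝒜_s(ℝⁿ)}. -/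

import Mathlib

/-!
Write `w(y) = y₁ / (1 + |y|^{n+2s+2})` for the weight of the norm `‖u‖_𝒜`. The proof rests on a
two-sided bound for the antisymmetric kernel: for `x ∈ B_{3/4}(e₁)` and `y` in the half space it is
at least `c w(y)`, and at most `C r^{-n-2s} w(y)` once `|x - y| ≥ r`. Evaluating the equation at a
suitable extremal point therefore compares the value of `u` there with `‖u‖_𝒜`. Throughout,
`R = 3ρ/4` and `g(y) = R² - |y - e₁|²`.

Lower bound (`exists_truncated_upper`, `harnack_lower`): for `m` slightly larger than a multiple of
`u(x₁)`, the function `u - m g` has a negative minimum over `B_R(e₁)`. At the minimum point the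
paraboloid touches `u` from below, so the near part of the integral is at most `C m`, while the
kernel bound extracts `-c ‖u‖_𝒜`. The equation gives `‖u‖_𝒜 ≤ C m`.

Upper bound (`exists_truncated_lower`, `harnack_upper`): let `x` maximise `u gⁿ` over `B_R(e₁)` and
put `d = g(x)`. On `B_r(x)` with `r = θ d`, `u` lies below a quadratic polynomial touching it at
`x`; its linear part integrates to zero by symmetry, and the gap between the polynomial and `u`,
weighted by a kernel which is at least `r^{-n-2s}`, contributes a good term `u(x) r^{-2s}` at the
cost of `r^{-n-2s} ‖u‖_𝒜`. For small `θ` the good term absorbs the quadratic error, the reflected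
kernel and the potential, leaving `u(x) dⁿ ≤ C ‖u‖_𝒜`. Since `g` is bounded below on `B_{ρ/2}(e₁)`,
this bounds `u` there.
-/

open MeasureTheory Metric Filter Topology

noncomputable section

/-- Euclidean space `ℝⁿ`. -/
abbrev Euc (n : ℕ) := EuclideanSpace ℝ (Fin n)

/-- Reflection `x ↦ x_* = (-x₁, x')` across the hyperplane `{x₁ = 0}`. -/
def reflFirst (n : ℕ) [NeZero n] (x : Euc n) : Euc n :=
  x - (2 * x 0) • EuclideanSpace.single 0 1

/-- The open half space `ℝⁿ₊ = {x : x₁ > 0}`. -/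
def halfSpace (n : ℕ) [NeZero n] : Set (Euc n) := {x | 0 < x 0}

/-- `u` is antisymmetric: `u(x_*) = -u(x)`. -/
def AntiSymmFn (n : ℕ) [NeZero n] (u : Euc n → ℝ) : Prop :=
  ∀ x, u (reflFirst n x) = - u x

/-- The normalising constant `c_{n,s}` of the fractional Laplacian. -/
def cns (n : ℕ) (s : ℝ) : ℝ :=
  s * (4 : ℝ) ^ s * Real.Gamma (((n : ℝ) + 2 * s) / 2) /
    (Real.pi ^ ((n : ℝ) / 2) * Real.Gamma (1 - s))

/-- The constant `γ_{n,s}` of the mean value formula. -/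
def gammans (n : ℕ) (s : ℝ) : ℝ :=
  Real.sin (Real.pi * s) * Real.Gamma ((n : ℝ) / 2) / Real.pi ^ ((n : ℝ) / 2 + 1)

/-- The first standard basis vector `e₁`. -/
def e1 (n : ℕ) [NeZero n] : Euc n := EuclideanSpace.single 0 1

/-- `‖u‖_{𝒜ₛ(ℝⁿ)} = ∫_{ℝⁿ₊} x₁|u(x)|/(1+|x|^{n+2s+2}) dx`. -/
def ANorm (n : ℕ) [NeZero n] (s : ℝ) (u : Euc n → ℝ) : ℝ :=
  ∫ x in halfSpace n, x 0 * |u x| / (1 + ‖x‖ ^ ((n : ℝ) + 2 * s + 2))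

/-- `u ∈ 𝒜ₛ(ℝⁿ)`. -/
def MemA (n : ℕ) [NeZero n] (s : ℝ) (u : Euc n → ℝ) : Prop :=
  AntiSymmFn n u ∧ LocallyIntegrable u volume ∧
    IntegrableOn (fun x => x 0 * |u x| / (1 + ‖x‖ ^ ((n : ℝ) + 2 * s + 2))) (halfSpace n) volume

/-- `u ∈ ℒₛ(ℝⁿ)`. -/
def MemL (n : ℕ) (s : ℝ) (u : Euc n → ℝ) : Prop :=
  LocallyIntegrable u volume ∧
    Integrable (fun x => |u x| / (1 + ‖x‖ ^ ((n : ℝ) + 2 * s))) volume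

/-- Membership in the Hölder space `C^β = C^{⌊β⌋, β-⌊β⌋}` on `Ω`. -/
def MemHolderOn {X : Type*} [NormedAddCommGroup X] [NormedSpace ℝ X]
    (β : ℝ) (Ω : Set X) (u : X → ℝ) : Prop :=
  ContDiffOn ℝ (⌊β⌋₊ : ℕ) u Ω ∧
    ∃ C : NNReal, HolderOnWith C (β - ⌊β⌋₊).toNNReal (iteratedFDerivWithin ℝ ⌊β⌋₊ u Ω) Ω

/-- `K` bounds the `C^β = C^{⌊β⌋, β-⌊β⌋}` norm of `u` on `Ω`. -/
def HolderBoundBy {X : Type*} [NormedAddCommGroup X] [NormedSpace ℝ X]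
    (β : ℝ) (Ω : Set X) (u : X → ℝ) (K : ℝ) : Prop :=
  (∀ i ≤ ⌊β⌋₊, ∀ x ∈ Ω, ‖iteratedFDerivWithin ℝ i u Ω x‖ ≤ K) ∧
    HolderOnWith K.toNNReal (β - ⌊β⌋₊).toNNReal (iteratedFDerivWithin ℝ ⌊β⌋₊ u Ω) Ω

/-- `β` is not an integer. -/
def NotInteger (β : ℝ) : Prop := ∀ k : ℤ, β ≠ k

/-- The antisymmetric kernel `|x-y|^{-n-2s} - |x_*-y|^{-n-2s}`. -/
def aKernel (n : ℕ) [NeZero n] (s : ℝ) (x y : Euc n) : ℝ :=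
  ‖x - y‖ ^ (-((n : ℝ) + 2 * s)) - ‖reflFirst n x - y‖ ^ (-((n : ℝ) + 2 * s))

/-- `(-Δ)ˢ u (x) = L` in the antisymmetric sense of Definition 1.4:
the truncated integrals over `ℝⁿ₊ ∖ B_ε(x)` (plus the constant zero-th order term)
converge to `L` as `ε → 0⁺`. -/
def HasAntiFracLap (n : ℕ) [NeZero n] (s : ℝ) (u : Euc n → ℝ) (x : Euc n) (L : ℝ) : Prop :=
  Filter.Tendsto
    (fun ε : ℝ =>
      cns n s * (∫ y in halfSpace n \ Metric.ball x ε, aKernel n s x y * (u x - u y)) +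
        (cns 1 s / s) * u x * (x 0) ^ (-(2 * s)))
    (𝓝[>] (0 : ℝ)) (𝓝 L)

/-- `(-Δ)ˢ u (x) = L` in the principal value sense. -/
def HasPVFracLap (n : ℕ) (s : ℝ) (u : Euc n → ℝ) (x : Euc n) (L : ℝ) : Prop :=
  Filter.Tendsto
    (fun ε : ℝ =>
      cns n s * ∫ y in (Metric.ball x ε)ᶜ, (u x - u y) / ‖x - y‖ ^ ((n : ℝ) + 2 * s))
    (𝓝[>] (0 : ℝ)) (𝓝 L)

/-! ### Geometry of the reflection and kernel bounds -/

/-- The weight `y₁ / (1 + |y|^{n+2s+2})` of the space `𝒜ₛ`. -/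
def wt (n : ℕ) [NeZero n] (s : ℝ) (y : Euc n) : ℝ :=
  y 0 / (1 + ‖y‖ ^ ((n : ℝ) + 2 * s + 2))

lemma norm_reflFirst_sub_sq (n : ℕ) [NeZero n] (x y : Euc n) :
    ‖reflFirst n x - y‖ ^ 2 = ‖x - y‖ ^ 2 + 4 * x 0 * y 0 := by
  have h : reflFirst n x - y = (x - y) - (2 * x 0) • EuclideanSpace.single 0 (1 : ℝ) := by
    unfold reflFirst; abel
  rw [h, norm_sub_sq_real, inner_smul_right, norm_smul]
  simp [EuclideanSpace.inner_single_right, mul_pow]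
  ring

lemma abs_coord_zero_le (n : ℕ) [NeZero n] (x : Euc n) : |x 0| ≤ ‖x‖ := by
  simpa using PiLp.norm_apply_le x 0

/-- Points of `B_{3/4}(e₁)` stay at distance `1/4` from the hyperplane and in `B_2`. -/
lemma ball_e1_bounds {n : ℕ} [NeZero n] {x : Euc n} (hx : x ∈ ball (e1 n) (3 / 4)) :
    1 / 4 < x 0 ∧ ‖x‖ < 2 := by
  rw [mem_ball, dist_eq_norm] at hx
  have h1 := abs_coord_zero_le n (x - e1 n)
  have h2 : (x - e1 n) 0 = x 0 - 1 := by simp [e1]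
  rw [h2] at h1
  have h3 : ‖e1 n‖ = 1 := by simp [e1]
  have h4 : ‖x‖ ≤ ‖x - e1 n‖ + ‖e1 n‖ := norm_le_norm_sub_add _ _
  constructor
  · have := neg_abs_le (x 0 - 1); linarith
  · linarith

lemma coord_near {n : ℕ} [NeZero n] {x y : Euc n} {r : ℝ} (hy : ‖x - y‖ < r) :
    x 0 - r < y 0 ∧ ‖y‖ < ‖x‖ + r := by
  have h1 := abs_coord_zero_le n (x - y)
  have h2 : (x - y) 0 = x 0 - y 0 := by simp
  rw [h2] at h1
  have h4 : ‖y‖ ≤ ‖y - x‖ + ‖x‖ := norm_le_norm_sub_add _ _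
  rw [norm_sub_rev] at h4
  constructor
  · have := le_abs_self (x 0 - y 0); linarith
  · linarith

lemma norm_sub_lt_refl {n : ℕ} [NeZero n] {x y : Euc n} (hx : 0 < x 0) (hy : 0 < y 0) :
    ‖x - y‖ < ‖reflFirst n x - y‖ := by
  have h := norm_reflFirst_sub_sq n x y
  have : 0 < 4 * x 0 * y 0 := by positivity
  exact lt_of_pow_lt_pow_left₀ 2 (norm_nonneg _) (by linarith)

lemma norm_refl_le {n : ℕ} [NeZero n] (x y : Euc n) :
    ‖reflFirst n x - y‖ ≤ ‖x‖ + ‖y‖ := by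
  have h := norm_reflFirst_sub_sq n x 0
  simp at h
  calc _ ≤ ‖reflFirst n x‖ + ‖y‖ := norm_sub_le _ _
    _ = _ := by rw [h]

lemma coord_add_le_norm_refl {n : ℕ} [NeZero n] (x y : Euc n) :
    x 0 + y 0 ≤ ‖reflFirst n x - y‖ := by
  have h1 := abs_coord_zero_le n (reflFirst n x - y)
  have h2 : (reflFirst n x - y) 0 = -(x 0 + y 0) := by simp [reflFirst]; ring
  rw [h2, abs_neg] at h1
  exact (le_abs_self _).trans h1

/-- Two-sided mean value estimate for `t ↦ t^{-q}`. -/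
lemma rpow_neg_sub_bounds {q a b : ℝ} (hq : 0 < q) (ha : 0 < a) (hab : a < b) :
    q * b ^ (-q - 1) * (b - a) ≤ a ^ (-q) - b ^ (-q) ∧
      a ^ (-q) - b ^ (-q) ≤ q * a ^ (-q - 1) * (b - a) := by
  have hd : ∀ t : ℝ, 0 < t → HasDerivAt (fun t : ℝ => t ^ (-q)) (-q * t ^ (-q - 1)) t :=
    fun t ht => Real.hasDerivAt_rpow_const (Or.inl ht.ne')
  obtain ⟨ξ, hξ, he⟩ := exists_hasDerivAt_eq_slope (fun t : ℝ => t ^ (-q))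
    (fun t => -q * t ^ (-q - 1)) hab
    (fun t ht => (hd t (ha.trans_le ht.1)).continuousAt.continuousWithinAt)
    (fun t ht => hd t (ha.trans ht.1))
  have hba : 0 < b - a := by linarith
  rw [eq_div_iff hba.ne'] at he
  have hξ0 : 0 < ξ := ha.trans hξ.1
  have h1 : b ^ (-q - 1) ≤ ξ ^ (-q - 1) :=
    Real.rpow_le_rpow_of_nonpos hξ0 hξ.2.le (by linarith)
  have h2 : ξ ^ (-q - 1) ≤ a ^ (-q - 1) :=
    Real.rpow_le_rpow_of_nonpos ha hξ.1.le (by linarith)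
  have h3 : a ^ (-q) - b ^ (-q) = q * ξ ^ (-q - 1) * (b - a) := by linarith
  rw [h3]
  constructor <;> gcongr

/-- The antisymmetric kernel is squeezed between two multiples of `x₁y₁`, obtained from the mean
value theorem and `|x_* - y| - |x - y| = 4x₁y₁ / (|x_* - y| + |x - y|)`. -/
lemma aKernel_bounds {n : ℕ} [NeZero n] {s : ℝ} (hs : 0 < s) {x y : Euc n}
    (hx : 0 < x 0) (hy : 0 < y 0) (hxy : 0 < ‖x - y‖) :
    2 * ((n : ℝ) + 2 * s) * (x 0 * y 0) *
        ‖reflFirst n x - y‖ ^ (-((n : ℝ) + 2 * s + 2)) ≤ aKernel n s x y ∧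
      aKernel n s x y ≤
        2 * ((n : ℝ) + 2 * s) * (x 0 * y 0) * ‖x - y‖ ^ (-((n : ℝ) + 2 * s + 2)) := by
  have hlt := norm_sub_lt_refl hx hy
  have hsq := norm_reflFirst_sub_sq n x y
  unfold aKernel
  set a := ‖x - y‖
  set b := ‖reflFirst n x - y‖
  have hb : 0 < b := hxy.trans hlt
  have hq : 0 < (n : ℝ) + 2 * s := by positivity
  set q := (n : ℝ) + 2 * s
  obtain ⟨h1, h2⟩ := rpow_neg_sub_bounds hq hxy hlt
  have hba : b - a = 4 * (x 0 * y 0) / (a + b) := by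
    field_simp; linarith
  have hxy0 : 0 < x 0 * y 0 := mul_pos hx hy
  have e : ∀ t : ℝ, 0 < t → t ^ (-(q + 2)) = t ^ (-q - 1) / t := by
    intro t ht
    rw [← Real.rpow_sub_one ht.ne']; congr 1; ring
  constructor
  · refine le_trans ?_ h1
    rw [e b hb, hba]
    have : 4 * (x 0 * y 0) / (b + b) ≤ 4 * (x 0 * y 0) / (a + b) := by gcongr
    calc _ = q * b ^ (-q - 1) * (4 * (x 0 * y 0) / (b + b)) := by field_simp; ring
      _ ≤ _ := by gcongr
  · refine h2.trans ?_
    rw [e a hxy, hba]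
    have : 4 * (x 0 * y 0) / (a + b) ≤ 4 * (x 0 * y 0) / (a + a) := by gcongr
    calc _ ≤ q * a ^ (-q - 1) * (4 * (x 0 * y 0) / (a + a)) := by gcongr
      _ = _ := by field_simp; ring

lemma aKernel_le {n : ℕ} [NeZero n] {s : ℝ} (x y : Euc n) :
    aKernel n s x y ≤ ‖x - y‖ ^ (-((n : ℝ) + 2 * s)) := by
  unfold aKernel
  have : 0 ≤ ‖reflFirst n x - y‖ ^ (-((n : ℝ) + 2 * s)) := by positivity
  linarith

lemma aKernel_nonneg {n : ℕ} [NeZero n] {s : ℝ} (hs : 0 < s) {x y : Euc n}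
    (hx : 0 < x 0) (hy : 0 < y 0) (hxy : 0 < ‖x - y‖) : 0 ≤ aKernel n s x y :=
  le_trans (by positivity) (aKernel_bounds hs hx hy hxy).1

lemma refl_kernel_le {n : ℕ} [NeZero n] {s : ℝ} (hs : 0 < s) {x y : Euc n}
    (hx : x ∈ ball (e1 n) (3 / 4)) (hy : 0 < y 0) :
    ‖reflFirst n x - y‖ ^ (-((n : ℝ) + 2 * s)) ≤ 4 ^ ((n : ℝ) + 2 * s) := by
  have h1 := coord_add_le_norm_refl x y
  have h2 := (ball_e1_bounds hx).1
  calc _ ≤ (1 / 4 : ℝ) ^ (-((n : ℝ) + 2 * s)) :=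
        Real.rpow_le_rpow_of_nonpos (by norm_num) (by linarith)
          (by have : (0:ℝ) ≤ n := by positivity
              linarith)
    _ = _ := by
      rw [one_div, Real.inv_rpow (by norm_num), ← Real.rpow_neg (by norm_num), neg_neg]

lemma wt_nonneg {n : ℕ} [NeZero n] {s : ℝ} {y : Euc n} (hy : 0 < y 0) : 0 ≤ wt n s y := by
  unfold wt; positivity

/-- On the half space the kernel dominates the weight of `𝒜ₛ`, uniformly in `x ∈ B_{3/4}(e₁)`. -/
lemma exists_aKernel_lower (n : ℕ) [NeZero n] {s : ℝ} (hs : 0 < s) :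
    ∃ c > 0, ∀ x ∈ ball (e1 n) (3 / 4), ∀ y : Euc n, 0 < y 0 → 0 < ‖x - y‖ →
      c * wt n s y ≤ aKernel n s x y := by
  set q := (n : ℝ) + 2 * s with hqd
  have hn : (0:ℝ) ≤ n := by positivity
  have hq : 0 < q := by positivity
  refine ⟨q / 2 / 4 ^ (q + 2), by positivity, fun x hx y hy hxy => ?_⟩
  obtain ⟨hx0, hx2⟩ := ball_e1_bounds hx
  refine le_trans ?_ (aKernel_bounds hs (by linarith) hy hxy).1
  rw [← hqd]
  have hb0 : 0 < ‖reflFirst n x - y‖ := hxy.trans (norm_sub_lt_refl (by linarith) hy)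
  have hb : ‖reflFirst n x - y‖ ≤ 2 + ‖y‖ := (norm_refl_le x y).trans (by linarith)
  -- `(2+t)^{q+2} ≤ 4^{q+2}(1+t^{q+2})`, by comparing `t` with `1`
  have hB : ‖reflFirst n x - y‖ ^ (q + 2) ≤ 4 ^ (q + 2) * (1 + ‖y‖ ^ (q + 2)) := by
    rcases le_total ‖y‖ 1 with h | h
    · have : ‖reflFirst n x - y‖ ^ (q + 2) ≤ 4 ^ (q + 2) :=
        Real.rpow_le_rpow hb0.le (by linarith) (by linarith)
      refine this.trans (le_mul_of_one_le_right (by positivity) ?_)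
      have : 0 ≤ ‖y‖ ^ (q + 2) := by positivity
      linarith
    · have : ‖reflFirst n x - y‖ ^ (q + 2) ≤ (4 * ‖y‖) ^ (q + 2) :=
        Real.rpow_le_rpow hb0.le (by linarith) (by linarith)
      rw [Real.mul_rpow (by norm_num) (by positivity)] at this
      refine this.trans ?_
      gcongr
      linarith
  rw [Real.rpow_neg hb0.le]
  unfold wt
  rw [← hqd]
  calc q / 2 / 4 ^ (q + 2) * (y 0 / (1 + ‖y‖ ^ (q + 2)))
      = 2 * q * (1 / 4 * y 0) * (4 ^ (q + 2) * (1 + ‖y‖ ^ (q + 2)))⁻¹ := by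
        field_simp; norm_num
    _ ≤ _ := by
        have : 0 < ‖reflFirst n x - y‖ ^ (q + 2) := by positivity
        gcongr

lemma exists_wt_lower (n : ℕ) [NeZero n] {s : ℝ} (hs : 0 < s) :
    ∃ c > 0, ∀ x ∈ ball (e1 n) (3 / 4), ∀ y : Euc n, ‖x - y‖ < 1 / 8 → c ≤ wt n s y := by
  refine ⟨1 / 8 / (1 + 3 ^ ((n : ℝ) + 2 * s + 2)), by positivity, fun x hx y hy => ?_⟩
  obtain ⟨hx0, hx2⟩ := ball_e1_bounds hx
  obtain ⟨h1, h2⟩ := coord_near hy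
  unfold wt
  have : (0:ℝ) ≤ n := by positivity
  gcongr <;> linarith

/-- Away from the pole the kernel is controlled by the weight; the power `r^{-n-2s}` is the sharp
one as `r → 0`. -/
lemma exists_aKernel_upper (n : ℕ) [NeZero n] {s : ℝ} (hs : 0 < s) :
    ∃ C > 0, ∀ x ∈ ball (e1 n) (3 / 4), ∀ y : Euc n, 0 < y 0 → ∀ r, 0 < r → r ≤ 1 →
      r ≤ ‖x - y‖ → aKernel n s x y ≤ C * r ^ (-((n : ℝ) + 2 * s)) * wt n s y := by
  obtain ⟨c, hc, hcw⟩ := exists_wt_lower n hs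
  set q := (n : ℝ) + 2 * s with hqd
  have hn : (0:ℝ) ≤ n := by positivity
  have hq : 0 < q := by positivity
  refine ⟨1 / c + 4 * q * (2 * 25 ^ (q + 2)), by positivity, fun x hx y hy r hr hr1 hrxy => ?_⟩
  obtain ⟨hx0, hx2⟩ := ball_e1_bounds hx
  have hw := wt_nonneg (s := s) hy
  have hrp : 1 ≤ r ^ (-q) := by
    rw [Real.rpow_neg hr.le]
    exact one_le_inv_iff₀.2 ⟨by positivity, Real.rpow_le_one hr.le hr1 hq.le⟩
  rcases lt_or_ge ‖x - y‖ (1 / 8) with h | h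
  · have h1 := hcw x hx y h
    calc aKernel n s x y ≤ ‖x - y‖ ^ (-q) := aKernel_le x y
      _ ≤ r ^ (-q) := Real.rpow_le_rpow_of_nonpos hr hrxy (by linarith)
      _ = 1 / c * r ^ (-q) * c := by field_simp
      _ ≤ 1 / c * r ^ (-q) * wt n s y := by gcongr
      _ ≤ _ := by gcongr; have : 0 ≤ 4 * q * (2 * 25 ^ (q + 2)) := by positivity
                  linarith
  · have hA : 0 < ‖x - y‖ := by linarith
    have hyn : 1 + ‖y‖ ≤ 25 * ‖x - y‖ := by
      have h4 : ‖y‖ ≤ ‖y - x‖ + ‖x‖ := norm_le_norm_sub_add _ _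
      rw [norm_sub_rev] at h4
      linarith
    have hB : 1 + ‖y‖ ^ (q + 2) ≤ 2 * 25 ^ (q + 2) * ‖x - y‖ ^ (q + 2) := by
      have h1 : (1:ℝ) ≤ (25 * ‖x - y‖) ^ (q + 2) :=
        Real.one_le_rpow (by linarith [norm_nonneg y]) (by linarith)
      have h2 : ‖y‖ ^ (q + 2) ≤ (25 * ‖x - y‖) ^ (q + 2) :=
        Real.rpow_le_rpow (norm_nonneg _) (by linarith) (by linarith)
      rw [Real.mul_rpow (by norm_num) hA.le] at h1 h2
      linarith
    have h0 := (aKernel_bounds hs (by linarith) hy hA).2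
    rw [← hqd] at h0
    have h5 : ‖x - y‖ ^ (-(q + 2)) ≤ 2 * 25 ^ (q + 2) * (1 + ‖y‖ ^ (q + 2))⁻¹ := by
      rw [Real.rpow_neg hA.le, ← div_eq_mul_inv, le_div_iff₀ (by positivity),
        inv_mul_le_iff₀ (by positivity)]
      linarith
    calc aKernel n s x y ≤ 2 * q * (x 0 * y 0) * ‖x - y‖ ^ (-(q + 2)) := h0
      _ ≤ 2 * q * (2 * y 0) * (2 * 25 ^ (q + 2) * (1 + ‖y‖ ^ (q + 2))⁻¹) := by
          have : x 0 ≤ 2 := ((le_abs_self _).trans (abs_coord_zero_le n x)).trans hx2.le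
          gcongr
      _ = 4 * q * (2 * 25 ^ (q + 2)) * 1 * wt n s y := by
          unfold wt; rw [← hqd]; ring
      _ ≤ _ := by
          gcongr
          have : 0 ≤ 1 / c := by positivity
          linarith

/-! ### Integrals of powers of the distance -/

lemma finrank_euc (n : ℕ) : Module.finrank ℝ (Euc n) = n := by simp

lemma volume_real_ball (n : ℕ) [NeZero n] (x : Euc n) {r : ℝ} (hr : 0 ≤ r) :
    volume.real (ball x r) = r ^ n * volume.real (ball (0 : Euc n) 1) := by
  rw [measureReal_def, Measure.addHaar_ball volume x hr, ENNReal.toReal_mul,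
    ENNReal.toReal_ofReal (by positivity), finrank_euc, measureReal_def]

lemma setIntegral_sub_left {n : ℕ} (x : Euc n) (S : Set (Euc n)) (f : Euc n → ℝ) :
    ∫ y in (fun y => x - y) ⁻¹' S, f (x - y) = ∫ h in S, f h :=
  (volume.measurePreserving_sub_left x).setIntegral_preimage_emb
    (MeasurableEquiv.subLeft x).measurableEmbedding f S

lemma integrableOn_sub_left {n : ℕ} (x : Euc n) (S : Set (Euc n)) (f : Euc n → ℝ) :
    IntegrableOn (fun y => f (x - y)) ((fun y => x - y) ⁻¹' S) ↔ IntegrableOn f S :=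
  (volume.measurePreserving_sub_left x).integrableOn_comp_preimage
    (MeasurableEquiv.subLeft x).measurableEmbedding (f := f) (s := S)

lemma preimage_sub_left_ball {n : ℕ} (x : Euc n) (r : ℝ) :
    (fun y => x - y) ⁻¹' ball (0 : Euc n) r = ball x r := by
  ext y; simp [mem_ball, dist_eq_norm, norm_sub_rev]

lemma integrableOn_ball_rpow {n : ℕ} [NeZero n] {s : ℝ} (hs : s < 1) (x : Euc n) (r : ℝ) :
    IntegrableOn (fun y : Euc n => ‖x - y‖ ^ (2 - ((n : ℝ) + 2 * s))) (ball x r) := by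
  rw [← preimage_sub_left_ball,
    integrableOn_sub_left x (ball 0 r) (fun h => ‖h‖ ^ (2 - ((n : ℝ) + 2 * s)))]
  have hn : 1 ≤ Module.finrank ℝ (Euc n) := by
    rw [finrank_euc]; exact NeZero.one_le
  refine integrableOn_ball_of_norm_le_rpow (C := 1) (α := (n : ℝ) + 2 * s - 2) hn
    (by rw [finrank_euc]; linarith) (ae_of_all _ fun h => ?_) ?_
  · rw [one_mul, Real.norm_of_nonneg (by positivity)]
    apply le_of_eq; congr 1; ring
  · exact (by fun_prop : Measurable fun h : Euc n => ‖h‖ ^ (2 - ((n : ℝ) + 2 * s))).aestronglyMeasurable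

lemma integral_ball_rpow {n : ℕ} [NeZero n] {s : ℝ} (x : Euc n) {r : ℝ} (hr : 0 < r) :
    ∫ y in ball x r, ‖x - y‖ ^ (2 - ((n : ℝ) + 2 * s)) =
      r ^ (2 - 2 * s) * ∫ h in ball (0 : Euc n) 1, ‖h‖ ^ (2 - ((n : ℝ) + 2 * s)) := by
  rw [← preimage_sub_left_ball,
    setIntegral_sub_left x (ball 0 r) (fun h => ‖h‖ ^ (2 - ((n : ℝ) + 2 * s)))]
  have h := Measure.setIntegral_comp_smul_of_pos volume
    (fun h : Euc n => ‖h‖ ^ (2 - ((n : ℝ) + 2 * s))) (ball 0 1) hr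
  rw [_root_.smul_ball hr.ne', finrank_euc] at h
  simp only [smul_zero, norm_smul, Real.norm_of_nonneg hr.le, mul_one, smul_eq_mul] at h
  simp_rw [Real.mul_rpow hr.le (norm_nonneg _), integral_const_mul] at h
  have e : r ^ (2 - 2 * s) = r ^ n * r ^ (2 - ((n : ℝ) + 2 * s)) := by
    rw [← Real.rpow_natCast, ← Real.rpow_add hr]; congr 1; ring
  rw [e, mul_assoc, h]
  field_simp

lemma integrableOn_compl_ball_rpow {n : ℕ} {s : ℝ} (hs : 0 < s) (x : Euc n) {r : ℝ} (hr : 0 < r) :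
    IntegrableOn (fun y : Euc n => ‖x - y‖ ^ (-((n : ℝ) + 2 * s))) (ball x r)ᶜ := by
  rw [← preimage_sub_left_ball, ← Set.preimage_compl,
    integrableOn_sub_left x (ball 0 r)ᶜ (fun h => ‖h‖ ^ (-((n : ℝ) + 2 * s)))]
  have hq : 0 ≤ (n : ℝ) + 2 * s := by positivity
  have h1 : Integrable (fun h : Euc n => (1 + ‖h‖) ^ (-((n : ℝ) + 2 * s))) volume :=
    integrable_one_add_norm (by rw [finrank_euc]; linarith)
  refine Integrable.mono' (h1.integrableOn (s := (ball 0 r)ᶜ) |>.const_mul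
      ((1 / r + 1) ^ ((n : ℝ) + 2 * s)))
    (by fun_prop : Measurable fun h : Euc n => ‖h‖ ^ (-((n : ℝ) + 2 * s))).aestronglyMeasurable ?_
  refine (ae_restrict_iff' measurableSet_ball.compl).2 (ae_of_all _ fun h hh => ?_)
  have hh' : r ≤ ‖h‖ := by simpa using hh
  have hpos : 0 < ‖h‖ := hr.trans_le hh'
  rw [Real.norm_of_nonneg (by positivity), Real.rpow_neg (by positivity),
    Real.rpow_neg (by positivity), ← div_eq_mul_inv, ← Real.div_rpow (by positivity) (by positivity),
    ← Real.inv_rpow (by positivity)]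
  refine Real.rpow_le_rpow (by positivity) ?_ hq
  rw [le_div_iff₀ (by positivity), inv_mul_le_iff₀ hpos]
  have : 1 ≤ ‖h‖ * (1 / r) := by rw [mul_one_div, one_le_div hr]; exact hh'
  linarith

lemma integral_compl_ball_rpow {n : ℕ} {s : ℝ} (x : Euc n) (r : ℝ) :
    ∫ y in (ball x r)ᶜ, ‖x - y‖ ^ (-((n : ℝ) + 2 * s)) =
      ∫ h in (ball (0 : Euc n) r)ᶜ, ‖h‖ ^ (-((n : ℝ) + 2 * s)) := by
  rw [← preimage_sub_left_ball, ← Set.preimage_compl,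
    setIntegral_sub_left x (ball 0 r)ᶜ (fun h => ‖h‖ ^ (-((n : ℝ) + 2 * s)))]

/-- The singular kernel is odd against linear functions, so first-order terms drop out of the
truncated integrals. -/
lemma integral_annulus_odd {n : ℕ} {s : ℝ} (x b : Euc n) (ε r : ℝ) :
    ∫ y in ball x r \ ball x ε, ‖x - y‖ ^ (-((n : ℝ) + 2 * s)) * inner ℝ b (x - y) = 0 := by
  set g : Euc n → ℝ := fun h => ‖h‖ ^ (-((n : ℝ) + 2 * s)) * inner ℝ b h with hg
  have h0 : ∀ z : Euc n, ball z r \ ball z ε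
      = (fun y => z - y) ⁻¹' (ball (0 : Euc n) r \ ball 0 ε) := by
    intro z
    rw [Set.preimage_sdiff, preimage_sub_left_ball, preimage_sub_left_ball]
  have h1 := setIntegral_sub_left x (ball 0 r \ ball 0 ε) g
  have h2 := setIntegral_sub_left 0 (ball 0 r \ ball 0 ε) g
  rw [← h0] at h1 h2
  have h3 : ∀ y, g (0 - y) = - g y := by intro y; simp [hg]
  simp_rw [h3, integral_neg] at h2
  rw [← hg] at *
  change ∫ y in ball x r \ ball x ε, g (x - y) = 0
  rw [h1]; linarith

lemma integrableOn_annulus_odd {n : ℕ} {s : ℝ} (hs : 0 < s) (x b : Euc n) {ε : ℝ} (hε : 0 < ε)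
    (r : ℝ) :
    IntegrableOn (fun y => ‖x - y‖ ^ (-((n : ℝ) + 2 * s)) * inner ℝ b (x - y))
      (ball x r \ ball x ε) := by
  have h1 := (integrableOn_compl_ball_rpow hs x hε).mono_set
    (show ball x r \ ball x ε ⊆ (ball x ε)ᶜ from fun y hy => hy.2)
  refine Integrable.mono' (h1.const_mul (‖b‖ * r))
    (by fun_prop : Measurable fun y => ‖x - y‖ ^ (-((n : ℝ) + 2 * s)) *
      inner ℝ b (x - y)).aestronglyMeasurable ?_
  refine (ae_restrict_iff' (measurableSet_ball.diff measurableSet_ball)).2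
    (ae_of_all _ fun y hy => ?_)
  have hy1 : ‖x - y‖ < r := by simpa [dist_eq_norm, norm_sub_rev] using hy.1
  rw [norm_mul, Real.norm_of_nonneg (by positivity), mul_comm]
  gcongr
  exact (norm_inner_le_norm b (x - y)).trans (by gcongr)

/-! ### Integrability of the truncated operator -/

lemma measurableSet_halfSpace (n : ℕ) [NeZero n] : MeasurableSet (halfSpace n) := by
  unfold halfSpace
  exact measurableSet_lt measurable_const (by fun_prop)

lemma measurable_aKernel (n : ℕ) [NeZero n] (s : ℝ) (x : Euc n) : Measurable (aKernel n s x) := by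
  unfold aKernel; fun_prop

lemma integrableOn_wt_mul {n : ℕ} [NeZero n] {s : ℝ} {u : Euc n → ℝ} (hA : MemA n s u)
    (hu : ∀ x ∈ halfSpace n, 0 ≤ u x) : IntegrableOn (fun y => wt n s y * u y) (halfSpace n) := by
  refine hA.2.2.congr_fun (fun y hy => ?_) (measurableSet_halfSpace n)
  simp only [wt, abs_of_nonneg (hu y hy)]; ring

lemma ANorm_eq {n : ℕ} [NeZero n] {s : ℝ} {u : Euc n → ℝ}
    (hu : ∀ x ∈ halfSpace n, 0 ≤ u x) : ANorm n s u = ∫ y in halfSpace n, wt n s y * u y := by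
  refine setIntegral_congr_fun (measurableSet_halfSpace n) (fun y hy => ?_)
  simp only [wt, abs_of_nonneg (hu y hy)]; ring

lemma ANorm_nonneg {n : ℕ} [NeZero n] {s : ℝ} {u : Euc n → ℝ}
    (hu : ∀ x ∈ halfSpace n, 0 ≤ u x) : 0 ≤ ANorm n s u := by
  rw [ANorm_eq hu]
  exact setIntegral_nonneg (measurableSet_halfSpace n)
    (fun y hy => mul_nonneg (wt_nonneg hy) (hu y hy))

lemma norm_sub_ge_of_notMem {n : ℕ} {x y : Euc n} {r : ℝ} (h : y ∉ ball x r) : r ≤ ‖x - y‖ := by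
  simpa [dist_eq_norm, norm_sub_rev] using h

lemma norm_sub_lt_of_mem {n : ℕ} {x y : Euc n} {r : ℝ} (h : y ∈ ball x r) : ‖x - y‖ < r := by
  simpa [dist_eq_norm, norm_sub_rev] using h

lemma integrableOn_truncated {n : ℕ} [NeZero n] {s : ℝ} (hs : 0 < s) {u : Euc n → ℝ}
    (hA : MemA n s u) (hu : ∀ x ∈ halfSpace n, 0 ≤ u x) {x : Euc n}
    (hx : x ∈ ball (e1 n) (3 / 4)) {ε : ℝ} (hε : 0 < ε) (hε1 : ε ≤ 1) (a : ℝ) :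
    IntegrableOn (fun y => aKernel n s x y * (a - u y)) (halfSpace n \ ball x ε) := by
  obtain ⟨C, hC, hCK⟩ := exists_aKernel_upper n hs
  have hx0 : 0 < x 0 := by linarith [(ball_e1_bounds hx).1]
  have hm : MeasurableSet (halfSpace n \ ball x ε) :=
    (measurableSet_halfSpace n).diff measurableSet_ball
  have i1 : IntegrableOn (fun y => aKernel n s x y) (halfSpace n \ ball x ε) := by
    refine Integrable.mono' ((integrableOn_compl_ball_rpow hs x hε).mono_set fun y hy => hy.2)
      (measurable_aKernel n s x).aestronglyMeasurable ?_
    refine (ae_restrict_iff' hm).2 (ae_of_all _ fun y hy => ?_)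
    have := norm_sub_ge_of_notMem hy.2
    rw [Real.norm_of_nonneg (aKernel_nonneg hs hx0 hy.1 (by linarith))]
    exact aKernel_le x y
  have i2 : IntegrableOn (fun y => aKernel n s x y * u y) (halfSpace n \ ball x ε) := by
    refine Integrable.mono' (((integrableOn_wt_mul hA hu).mono_set
      (fun y (hy : y ∈ halfSpace n \ ball x ε) => hy.1)).const_mul
        (C * ε ^ (-((n : ℝ) + 2 * s))))
      ((measurable_aKernel n s x).aestronglyMeasurable.mul
        hA.2.1.aestronglyMeasurable.restrict) ?_
    refine (ae_restrict_iff' hm).2 (ae_of_all _ fun y hy => ?_)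
    have h1 := norm_sub_ge_of_notMem hy.2
    have h2 := aKernel_nonneg hs hx0 hy.1 (by linarith)
    have h3 := hu y hy.1
    rw [Real.norm_of_nonneg (mul_nonneg h2 h3), ← mul_assoc]
    gcongr
    exact hCK x hx y hy.1 ε hε hε1 h1
  exact ((i1.mul_const a).sub i2).congr (ae_of_all _ fun y => by simp only [Pi.sub_apply]; ring)

/-! ### One-sided bounds for the truncated operator at a touching point -/

lemma integrableOn_annulus_quadratic {n : ℕ} [NeZero n] {s : ℝ} (hs : 0 < s) (hs1 : s < 1)
    (x b : Euc n) {ε : ℝ} (hε : 0 < ε) (r p₁ p₂ p₃ : ℝ) :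
    IntegrableOn (fun y => p₁ * (‖x - y‖ ^ (-((n : ℝ) + 2 * s)) * inner ℝ b (x - y))
      + p₂ * ‖x - y‖ ^ (2 - ((n : ℝ) + 2 * s)) + p₃) (ball x r \ ball x ε) ∧
    ∫ y in ball x r \ ball x ε, (p₁ * (‖x - y‖ ^ (-((n : ℝ) + 2 * s)) * inner ℝ b (x - y))
      + p₂ * ‖x - y‖ ^ (2 - ((n : ℝ) + 2 * s)) + p₃) =
      p₂ * (∫ y in ball x r \ ball x ε, ‖x - y‖ ^ (2 - ((n : ℝ) + 2 * s)))
        + p₃ * volume.real (ball x r \ ball x ε) := by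
  have iodd := (integrableOn_annulus_odd hs x b hε r).const_mul p₁
  have ipow := ((integrableOn_ball_rpow hs1 x r).mono_set
    (Set.sdiff_subset (t := ball x ε))).const_mul p₂
  have hfin : volume (ball x r \ ball x ε) ≠ ⊤ :=
    ((measure_mono Set.sdiff_subset).trans_lt (measure_ball_lt_top (x := x) (r := r))).ne
  have iconst : IntegrableOn (fun _ : Euc n => p₃) (ball x r \ ball x ε) :=
    integrableOn_const hfin
  have isum : IntegrableOn (fun y => p₁ * (‖x - y‖ ^ (-((n : ℝ) + 2 * s)) * inner ℝ b (x - y))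
      + p₂ * ‖x - y‖ ^ (2 - ((n : ℝ) + 2 * s))) (ball x r \ ball x ε) := iodd.add ipow
  refine ⟨isum.add iconst, ?_⟩
  rw [integral_add isum iconst, integral_add iodd ipow, integral_const_mul, integral_const_mul,
    integral_annulus_odd, setIntegral_const, smul_eq_mul]
  ring

lemma integral_annulus_rpow_le {n : ℕ} [NeZero n] {s : ℝ} (hs1 : s < 1)
    (x : Euc n) (ε : ℝ) {r : ℝ} (hr : 0 < r) :
    ∫ y in ball x r \ ball x ε, ‖x - y‖ ^ (2 - ((n : ℝ) + 2 * s)) ≤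
      r ^ (2 - 2 * s) * ∫ h in ball (0 : Euc n) 1, ‖h‖ ^ (2 - ((n : ℝ) + 2 * s)) := by
  rw [← integral_ball_rpow x hr]
  exact setIntegral_mono_set (integrableOn_ball_rpow hs1 x r)
    (ae_of_all _ fun y => by simp only [Pi.zero_apply]; positivity)
    (Set.sdiff_subset).eventuallyLE

lemma kernel_mul_sq {v q : ℝ} (hv : 0 < v) : v ^ (2 - q) = v ^ (-q) * v ^ 2 := by
  rw [← Real.rpow_natCast, ← Real.rpow_add hv]; congr 1; push_cast; ring

/-- The algebra behind the pointwise minorant: `κ`, `κs` are the two halves of the kernel, and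
`U * (1 + I + AN)` is the touching quadratic. -/
lemma pointwise_minorant {κ κs k U V I A N C w M : ℝ} (hκ : k ≤ κ) (hk : 0 ≤ k) (hκs0 : 0 ≤ κs)
    (hκs : κs ≤ M) (hU : 0 ≤ U) (hV : 0 ≤ V) (hA : 0 ≤ A) (hN : 0 ≤ N) (hI : -(1 / 4) ≤ I)
    (hQ : V ≤ U * (1 + I + A * N)) (hcw : V ≤ C * (w * V)) :
    -(C * k) * (w * V) + (-U * (κ * I) + -(U * A) * (κ * N) + (3 / 4 * U * k - M * U)) ≤
      (κ - κs) * (U - V) := by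
  have e1 : k * (U * (1 + I + A * N) - V) ≤ κ * (U * (1 + I + A * N) - V) :=
    mul_le_mul_of_nonneg_right hκ (by linarith)
  have e2 : k * (3 / 4 * U) ≤ k * (U * (1 + I + A * N)) := by
    have h1 : 3 / 4 ≤ 1 + I + A * N := by have := mul_nonneg hA hN; linarith
    have h2 : U * (3 / 4) ≤ U * (1 + I + A * N) := mul_le_mul_of_nonneg_left h1 hU
    exact mul_le_mul_of_nonneg_left (by linarith) hk
  have e3 : k * V ≤ k * (C * (w * V)) := mul_le_mul_of_nonneg_left hcw hk
  have e4 : κs * U ≤ M * U := by gcongr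
  have e5 : 0 ≤ κs * V := by positivity
  linarith

set_option maxHeartbeats 800000 in
/-- If a quadratic touches `u` from above at `x` on `B_r(x)`, the truncated operator at `x` is
bounded below: the gap between the quadratic and `u` is weighted by at least `r^{-n-2s}`, which
produces the good term `u(x) r^{-2s}` at the price of the mass `r^{-n-2s}‖u‖_𝒜`. -/
lemma exists_truncated_lower (n : ℕ) [NeZero n] {s : ℝ} (hs : 0 < s) (hs1 : s < 1) :
    ∃ C > 0, ∀ u : Euc n → ℝ, MemA n s u → (∀ x ∈ halfSpace n, 0 ≤ u x) →
      ∀ x ∈ ball (e1 n) (3 / 4), ∀ r, 0 < r → r ≤ 1 / 8 → ∀ (b : Euc n) (A : ℝ), 0 ≤ A →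
      ‖b‖ * r ≤ 1 / 4 →
      (∀ y ∈ ball x r, u y ≤ u x * (1 + inner ℝ b (x - y) + A * ‖x - y‖ ^ 2)) →
      ∀ ε, 0 < ε → ε ≤ r / 2 →
      u x * (3 / 8 * volume.real (ball (0 : Euc n) 1) * r ^ (-(2 * s))
          - A * (r ^ (2 - 2 * s) * ∫ h in ball (0 : Euc n) 1, ‖h‖ ^ (2 - ((n : ℝ) + 2 * s)))
          - 4 ^ ((n : ℝ) + 2 * s) * volume.real (ball (0 : Euc n) 1))
        - C * r ^ (-((n : ℝ) + 2 * s)) * ANorm n s u ≤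
      ∫ y in halfSpace n \ ball x ε, aKernel n s x y * (u x - u y) := by
  obtain ⟨C₁, hC₁, hKup⟩ := exists_aKernel_upper n hs
  obtain ⟨c₂, hc₂, hw⟩ := exists_wt_lower n hs
  have hn0 : (0 : ℝ) ≤ n := by positivity
  refine ⟨C₁ + 1 / c₂, by positivity, ?_⟩
  intro u hA hu x hx r hr hr8 b A hA0 hb htouch ε hε hεr
  set q := (n : ℝ) + 2 * s with hqd
  have hq : 0 < q := by positivity
  set C := C₁ + 1 / c₂ with hCd
  have hCC₁ : C₁ ≤ C := by rw [hCd]; have : 0 ≤ 1 / c₂ := by positivity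
                           linarith
  have hCc₂ : 1 / c₂ ≤ C := by rw [hCd]; linarith
  set k := r ^ (-q) with hk
  have hk0 : 0 < k := by positivity
  set ω := volume.real (ball (0 : Euc n) 1) with hω
  have hω0 : 0 ≤ ω := measureReal_nonneg
  have hx0 : 1 / 4 < x 0 := (ball_e1_bounds hx).1
  have hsub : ball x r ⊆ halfSpace n := fun y hy => by
    have := (coord_near (norm_sub_lt_of_mem hy)).1
    show 0 < y 0
    linarith
  have hux : 0 ≤ u x := hu x (show 0 < x 0 by linarith)
  set S := halfSpace n \ ball x ε with hS
  have hSm : MeasurableSet S := (measurableSet_halfSpace n).diff measurableSet_ball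
  set T := ball x r \ ball x ε with hT
  have hTm : MeasurableSet T := measurableSet_ball.diff measurableSet_ball
  have hTS : T ⊆ S := fun y hy => ⟨hsub hy.1, hy.2⟩
  set ψ : Euc n → ℝ := fun y =>
    (-u x) * (‖x - y‖ ^ (-q) * inner ℝ b (x - y)) + (-(u x * A)) * ‖x - y‖ ^ (2 - q)
      + (3 / 4 * u x * k - 4 ^ q * u x) with hψ
  have iwu : IntegrableOn (fun y => wt n s y * u y) S :=
    (integrableOn_wt_mul hA hu).mono_set (fun y hy => hy.1)
  obtain ⟨iψ, hψint⟩ : IntegrableOn ψ T ∧ ∫ y in T, ψ y =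
      -(u x * A) * (∫ y in T, ‖x - y‖ ^ (2 - q))
        + (3 / 4 * u x * k - 4 ^ q * u x) * volume.real T :=
    integrableOn_annulus_quadratic hs hs1 x b hε r _ _ _
  have hmono : ∫ y in S, ((-(C * k)) * (wt n s y * u y) + T.indicator ψ y) ≤
      ∫ y in S, aKernel n s x y * (u x - u y) := by
    refine setIntegral_mono_on ((iwu.const_mul _).add
      ((integrable_indicator_iff hTm).2 iψ).integrableOn)
      (integrableOn_truncated hs hA hu hx hε (by linarith) _) hSm ?_
    intro y hy
    have hyH : 0 < y 0 := hy.1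
    have huy := hu y hy.1
    have hwy := wt_nonneg (s := s) hyH
    have hyε := norm_sub_ge_of_notMem hy.2
    have hypos : 0 < ‖x - y‖ := by linarith
    have hK0 := aKernel_nonneg hs (by linarith) hyH hypos
    by_cases hyr : y ∈ ball x r
    · have hyT : y ∈ T := ⟨hyr, hy.2⟩
      rw [Set.indicator_of_mem hyT]
      have hyr' := norm_sub_lt_of_mem hyr
      have hκ : k ≤ ‖x - y‖ ^ (-q) :=
        Real.rpow_le_rpow_of_nonpos hypos hyr'.le (by linarith)
      have hκs := refl_kernel_le hs hx hyH
      have hκs0 : 0 ≤ ‖reflFirst n x - y‖ ^ (-q) := by positivity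
      have hin : -(1 / 4) ≤ inner ℝ b (x - y) := by
        have h1 := abs_real_inner_le_norm b (x - y)
        have h2 : ‖b‖ * ‖x - y‖ ≤ ‖b‖ * r := by gcongr
        have h3 := neg_abs_le (inner ℝ b (x - y) : ℝ)
        linarith
      have hQ := htouch y hyr
      have hcw : u y ≤ C * (wt n s y * u y) := by
        have h1 : 1 ≤ C * wt n s y := by
          calc 1 = 1 / c₂ * c₂ := by field_simp
            _ ≤ C * wt n s y := by
              have := hw x hx y (by linarith)
              gcongr
        nlinarith
      simp only [hψ, kernel_mul_sq hypos]
      exact pointwise_minorant hκ hk0.le hκs0 hκs hux huy hA0 (by positivity) hin hQ hcw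
    · have hyT : y ∉ T := fun h => hyr h.1
      rw [Set.indicator_of_notMem hyT]
      have h1 := hKup x hx y hyH r hr (by linarith) (norm_sub_ge_of_notMem hyr)
      have h2 : aKernel n s x y * u y ≤ C * k * (wt n s y * u y) := by
        rw [← mul_assoc]
        refine mul_le_mul_of_nonneg_right (h1.trans ?_) huy
        gcongr
      have h3 := mul_nonneg hK0 hux
      linarith
  refine le_trans ?_ hmono
  rw [integral_add (iwu.const_mul _) ((integrable_indicator_iff hTm).2 iψ).integrableOn,
    integral_const_mul, setIntegral_indicator hTm, Set.inter_eq_right.2 hTS]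
  have hwu : ∫ y in S, wt n s y * u y ≤ ANorm n s u := by
    rw [ANorm_eq hu]
    refine setIntegral_mono_set (integrableOn_wt_mul hA hu) ?_
      (Set.sdiff_subset).eventuallyLE
    exact (ae_restrict_iff' (measurableSet_halfSpace n)).2
      (ae_of_all _ fun y hy => mul_nonneg (wt_nonneg hy) (hu y hy))
  have hpowle := integral_annulus_rpow_le hs1 x ε hr
  have hvolT : volume.real T = r ^ n * ω - ε ^ n * ω := by
    rw [hT, measureReal_sdiff (ball_subset_ball (by linarith)) measurableSet_ball,
      volume_real_ball n x hr.le, volume_real_ball n x hε.le]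
  have hεn : ε ^ n ≤ r ^ n / 2 := by
    calc ε ^ n ≤ (r / 2) ^ n := by gcongr
      _ = r ^ n * (1 / 2) ^ n := by rw [← mul_pow]; congr 1; ring
      _ ≤ r ^ n * (1 / 2) ^ 1 := by
          gcongr r ^ n * ?_
          exact pow_le_pow_of_le_one (by norm_num) (by norm_num) NeZero.one_le
      _ = _ := by ring
  have hkr : k * r ^ n = r ^ (-(2 * s)) := by
    rw [hk, ← Real.rpow_natCast, ← Real.rpow_add hr]; congr 1; rw [hqd]; ring
  have hrn : r ^ n ≤ 1 := pow_le_one₀ hr.le (by linarith)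
  have hv1 : r ^ n * ω / 2 ≤ volume.real T := by
    rw [hvolT]
    have := mul_le_mul_of_nonneg_right hεn hω0
    linarith
  have hv2 : volume.real T ≤ ω := by
    rw [hvolT]
    have h1 : 0 ≤ ε ^ n * ω := by positivity
    have h2 := mul_le_mul_of_nonneg_right hrn hω0
    linarith
  rw [hψint]
  have f1 : (C * k) * ∫ y in S, wt n s y * u y ≤ (C * k) * ANorm n s u := by
    have : 0 < C := by positivity
    gcongr
  have f2 : u x * A * ∫ y in T, ‖x - y‖ ^ (2 - q) ≤ u x * A *
      (r ^ (2 - 2 * s) * ∫ h in ball (0 : Euc n) 1, ‖h‖ ^ (2 - q)) := by gcongr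
  have f3 : 3 / 4 * u x * k * (r ^ n * ω / 2) ≤ 3 / 4 * u x * k * volume.real T := by gcongr
  have f4 : 4 ^ q * u x * volume.real T ≤ 4 ^ q * u x * ω := by gcongr
  have f5 : 3 / 4 * u x * k * (r ^ n * ω / 2) = u x * (3 / 8 * ω * r ^ (-(2 * s))) := by
    rw [← hkr]; ring
  linarith

/-- The algebra behind the pointwise majorant: `κ`, `κs` are the two halves of the kernel, `cw` is
a lower bound for `κ - κs`, and `U + m * (I - N)` is the touching quadratic. -/
lemma pointwise_majorant {κ κs U V I N m c w M : ℝ} (hκs0 : 0 ≤ κs) (hκs : κs ≤ M) (hm : 0 ≤ m)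
    (hU : U ≤ m) (hN : 0 ≤ N) (hI : I ≤ 1) (hc : 0 ≤ c) (hw0 : 0 ≤ w) (hw : w ≤ 3)
    (hcw : c * w ≤ κ - κs) (hQ : U + m * (I - N) ≤ V) :
    (κ - κs) * (U - V) ≤
      -c * (w * V) + (-m * (κ * I) + m * (κ * N) + (M * m + 6 * c * m)) := by
  have e1 : (κ - κs) * (U + m * (I - N) - V) ≤ c * w * (U + m * (I - N) - V) :=
    mul_le_mul_of_nonpos_right hcw (by linarith)
  have e2 : κs * (I - N) ≤ M := by
    calc κs * (I - N) ≤ κs * 1 := mul_le_mul_of_nonneg_left (by linarith) hκs0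
      _ ≤ M := by linarith
  have e3 : m * (κs * (I - N)) ≤ m * M := mul_le_mul_of_nonneg_left e2 hm
  have e4 : m * (I - N) ≤ m * 1 := mul_le_mul_of_nonneg_left (by linarith) hm
  have e5 : c * w * (U + m * (I - N)) ≤ c * 3 * (2 * m) :=
    (mul_le_mul_of_nonneg_left (by linarith : U + m * (I - N) ≤ 2 * m) (by positivity)).trans
      (by gcongr)
  linarith

set_option maxHeartbeats 800000 in
/-- If `u` is touched from below at `x` by a quadratic of size `m` (and `u(x) ≤ m`), the truncated
operator at `x` is at most `C m` minus a fixed fraction of the `𝒜ₛ`-mass of `u`. -/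
lemma exists_truncated_upper (n : ℕ) [NeZero n] {s : ℝ} (hs : 0 < s) (hs1 : s < 1) :
    ∃ c > 0, ∃ C > 0, ∀ u : Euc n → ℝ, MemA n s u → (∀ x ∈ halfSpace n, 0 ≤ u x) →
      ∀ x ∈ ball (e1 n) (3 / 4), ∀ (b : Euc n) (m : ℝ), 0 ≤ m → ‖b‖ ≤ 2 → u x ≤ m →
      (∀ y ∈ ball x (1 / 8), u x + m * (inner ℝ b (x - y) - ‖x - y‖ ^ 2) ≤ u y) →
      ∀ ε, 0 < ε → ε ≤ 1 / 8 →
      ∫ y in halfSpace n \ ball x ε, aKernel n s x y * (u x - u y) ≤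
        C * m - c * ∫ y in halfSpace n \ ball x ε, wt n s y * u y := by
  obtain ⟨c, hc, hKlow⟩ := exists_aKernel_lower n hs
  have hn0 : (0 : ℝ) ≤ n := by positivity
  set D := ∫ h in ball (0 : Euc n) 1, ‖h‖ ^ (2 - ((n : ℝ) + 2 * s)) with hD
  have hD0 : 0 ≤ D := by
    rw [hD]; exact setIntegral_nonneg measurableSet_ball fun _ _ => by positivity
  set J := ∫ h in (ball (0 : Euc n) (1 / 8))ᶜ, ‖h‖ ^ (-((n : ℝ) + 2 * s)) with hJ
  have hJ0 : 0 ≤ J := by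
    rw [hJ]; exact setIntegral_nonneg measurableSet_ball.compl fun _ _ => by positivity
  set ω := volume.real (ball (0 : Euc n) 1) with hω
  have hω0 : 0 ≤ ω := measureReal_nonneg
  refine ⟨c, hc, (1 / 8) ^ (2 - 2 * s) * D + (4 ^ ((n : ℝ) + 2 * s) + 6 * c) * ω + J + 1,
    by positivity, ?_⟩
  intro u hA hu x hx b m hm hb hum htouch ε hε hε8
  set q := (n : ℝ) + 2 * s with hqd
  have hq : 0 < q := by positivity
  obtain ⟨hx0, hx2⟩ := ball_e1_bounds hx
  have hsub : ball x (1 / 8) ⊆ halfSpace n := fun y hy => by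
    have := (coord_near (norm_sub_lt_of_mem hy)).1
    show 0 < y 0
    linarith
  set S := halfSpace n \ ball x ε with hS
  have hSm : MeasurableSet S := (measurableSet_halfSpace n).diff measurableSet_ball
  set T := ball x (1 / 8) \ ball x ε with hT
  have hTm : MeasurableSet T := measurableSet_ball.diff measurableSet_ball
  have hTS : T ⊆ S := fun y hy => ⟨hsub hy.1, hy.2⟩
  set ψ : Euc n → ℝ := fun y =>
    (-m) * (‖x - y‖ ^ (-q) * inner ℝ b (x - y)) + m * ‖x - y‖ ^ (2 - q)
      + (4 ^ q * m + 6 * c * m) with hψ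
  set χ : Euc n → ℝ := (ball x (1 / 8))ᶜ.indicator (fun y => m * ‖x - y‖ ^ (-q)) with hχ
  have iwu : IntegrableOn (fun y => wt n s y * u y) S :=
    (integrableOn_wt_mul hA hu).mono_set (fun y hy => hy.1)
  obtain ⟨iψ, hψint⟩ : IntegrableOn ψ T ∧ ∫ y in T, ψ y =
      m * (∫ y in T, ‖x - y‖ ^ (2 - q)) + (4 ^ q * m + 6 * c * m) * volume.real T :=
    integrableOn_annulus_quadratic hs hs1 x b hε _ _ _ _
  have iχ : Integrable χ :=
    (integrable_indicator_iff measurableSet_ball.compl).2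
      ((integrableOn_compl_ball_rpow hs x (by norm_num)).const_mul m)
  have iψ' : IntegrableOn (T.indicator ψ) S := ((integrable_indicator_iff hTm).2 iψ).integrableOn
  have imain : IntegrableOn (fun y => (-c) * (wt n s y * u y) + T.indicator ψ y) S :=
    (iwu.const_mul _).add iψ'
  have hmono : ∫ y in S, aKernel n s x y * (u x - u y) ≤
      ∫ y in S, ((-c) * (wt n s y * u y) + T.indicator ψ y + χ y) := by
    refine setIntegral_mono_on (integrableOn_truncated hs hA hu hx hε (by linarith) _)
      (imain.add iχ.integrableOn) hSm ?_
    intro y hy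
    have hyH : 0 < y 0 := hy.1
    have huy := hu y hy.1
    have hwy := wt_nonneg (s := s) hyH
    have hyε := norm_sub_ge_of_notMem hy.2
    have hypos : 0 < ‖x - y‖ := by linarith
    have hK0 := aKernel_nonneg hs (by linarith) hyH hypos
    have hKl := hKlow x hx y hyH hypos
    by_cases hyr : y ∈ ball x (1 / 8)
    · have hyT : y ∈ T := ⟨hyr, hy.2⟩
      rw [Set.indicator_of_mem hyT, hχ, Set.indicator_of_notMem (Set.notMem_compl_iff.2 hyr), add_zero]
      have hyr' := norm_sub_lt_of_mem hyr
      have hin : inner ℝ b (x - y) ≤ 1 := by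
        have h1 := abs_real_inner_le_norm b (x - y)
        have h2 : ‖b‖ * ‖x - y‖ ≤ 2 * (1 / 8) := by gcongr
        have h3 := le_abs_self (inner ℝ b (x - y) : ℝ)
        linarith
      have hw3 : wt n s y ≤ 3 := by
        have h1 := (le_abs_self _).trans (abs_coord_zero_le n y)
        have h2 := (coord_near hyr').2
        refine (div_le_self hyH.le ?_).trans (by linarith)
        have : 0 ≤ ‖y‖ ^ ((n : ℝ) + 2 * s + 2) := by positivity
        linarith
      simp only [hψ, kernel_mul_sq hypos]
      exact pointwise_majorant (by positivity) (refl_kernel_le hs hx hyH) hm hum (by positivity)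
        hin hc.le hwy hw3 hKl (htouch y hyr)
    · have hyT : y ∉ T := fun h => hyr h.1
      rw [Set.indicator_of_notMem hyT, hχ, Set.indicator_of_mem (show y ∈ (ball x (1 / 8))ᶜ from hyr)]
      have h1 : c * wt n s y * u y ≤ aKernel n s x y * u y := by gcongr
      have h2 : aKernel n s x y * u x ≤ ‖x - y‖ ^ (-q) * m := by
        have hux : 0 ≤ u x := hu x (show 0 < x 0 by linarith)
        exact mul_le_mul (aKernel_le x y) hum hux (by positivity)
      linarith
  refine hmono.trans ?_
  rw [integral_add imain iχ.integrableOn, integral_add (iwu.const_mul _) iψ',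
    integral_const_mul, setIntegral_indicator hTm, Set.inter_eq_right.2 hTS, hψint]
  have hpowle := integral_annulus_rpow_le hs1 x ε (r := 1 / 8) (by norm_num)
  have hvolT : volume.real T ≤ ω := by
    refine (measureReal_mono Set.sdiff_subset (measure_ball_lt_top).ne).trans ?_
    rw [volume_real_ball n x (by norm_num)]
    exact mul_le_of_le_one_left hω0 (pow_le_one₀ (by norm_num) (by norm_num))
  have hχle : ∫ y in S, χ y ≤ m * J := by
    have h1 : ∫ y in S, χ y ≤ ∫ y, χ y :=
      setIntegral_le_integral iχ (ae_of_all _ fun y =>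
        Set.indicator_nonneg (fun z _ => by positivity) y)
    refine h1.trans (le_of_eq ?_)
    rw [hχ, integral_indicator measurableSet_ball.compl, integral_const_mul,
      integral_compl_ball_rpow]
  have f1 : m * ∫ y in T, ‖x - y‖ ^ (2 - q) ≤ m * ((1 / 8) ^ (2 - 2 * s) * D) := by gcongr
  have f2 : (4 ^ q * m + 6 * c * m) * volume.real T ≤ (4 ^ q * m + 6 * c * m) * ω := by gcongr
  linarith

/-! ### Passage to the limit -/

lemma cns_pos {n : ℕ} [NeZero n] {s : ℝ} (hs : 0 < s) (hs1 : s < 1) : 0 < cns n s := by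
  unfold cns
  have h1 : 0 < Real.Gamma (((n : ℝ) + 2 * s) / 2) := Real.Gamma_pos_of_pos (by positivity)
  have h2 : 0 < Real.Gamma (1 - s) := Real.Gamma_pos_of_pos (by linarith)
  have := Real.pi_pos
  positivity

lemma tendsto_mass {n : ℕ} [NeZero n] {s : ℝ} {u : Euc n → ℝ} (hA : MemA n s u)
    (hu : ∀ x ∈ halfSpace n, 0 ≤ u x) (x : Euc n) :
    Tendsto (fun ε : ℝ => ∫ y in halfSpace n \ ball x ε, wt n s y * u y) (𝓝[>] 0)
      (𝓝 (ANorm n s u)) := by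
  have hi := integrableOn_wt_mul hA hu
  have h0 : Tendsto (fun ε : ℝ => (volume.restrict (halfSpace n)) (ball x ε)) (𝓝[>] 0) (𝓝 0) := by
    have h1 : Tendsto (fun ε : ℝ => ENNReal.ofReal (ε ^ n) * volume (ball (0 : Euc n) 1))
        (𝓝[>] 0) (𝓝 (ENNReal.ofReal (0 ^ n) * volume (ball (0 : Euc n) 1))) := by
      refine ENNReal.Tendsto.mul_const (ENNReal.tendsto_ofReal ?_)
        (Or.inr measure_ball_lt_top.ne)
      exact ((continuous_pow n).tendsto 0).mono_left nhdsWithin_le_nhds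
    rw [zero_pow (NeZero.ne n), ENNReal.ofReal_zero, zero_mul] at h1
    refine tendsto_of_tendsto_of_tendsto_of_le_of_le' tendsto_const_nhds h1
      (Eventually.of_forall fun _ => zero_le) ?_
    filter_upwards [self_mem_nhdsWithin] with ε hε
    refine (Measure.restrict_apply_le _ _).trans (le_of_eq ?_)
    rw [Measure.addHaar_ball volume x (le_of_lt hε), finrank_euc]
  have h2 := Integrable.tendsto_setIntegral_nhds_zero hi h0
  have h3 : Tendsto (fun ε : ℝ => ANorm n s u -
      ∫ y in ball x ε, wt n s y * u y ∂(volume.restrict (halfSpace n))) (𝓝[>] 0)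
      (𝓝 (ANorm n s u - 0)) := tendsto_const_nhds.sub h2
  rw [sub_zero] at h3
  refine h3.congr fun ε => ?_
  have h4 := integral_inter_add_sdiff (s := halfSpace n) (t := ball x ε) measurableSet_ball hi
  rw [ANorm_eq hu, ← h4, Measure.restrict_restrict measurableSet_ball, Set.inter_comm]
  ring

/-- A quadratic expansion of `(1+z)^{-n}` from above near `z = 0`. -/
lemma exists_inv_pow_le (n : ℕ) : ∃ C : ℝ, 0 ≤ C ∧ ∀ z : ℝ, |z| ≤ 1 / 2 →
    ((1 + z) ^ n)⁻¹ ≤ 1 - n * z + C * z ^ 2 := by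
  induction n with
  | zero => exact ⟨0, le_rfl, fun z _ => by simp⟩
  | succ n ih =>
    obtain ⟨C, hC, h⟩ := ih
    refine ⟨2 * (C + n + 1), by positivity, fun z hz => ?_⟩
    have h1 := h z hz
    obtain ⟨hz1, hz2⟩ := abs_le.1 hz
    have hp : 0 < 1 + z := by linarith
    rw [pow_succ, mul_inv]
    refine (mul_le_mul_of_nonneg_right h1 (by positivity)).trans ?_
    rw [← div_eq_mul_inv, div_le_iff₀ hp]
    push_cast
    have : 0 ≤ (C + n + 1) * (z ^ 2 * (1 + 2 * z)) := by
      have : 0 ≤ 1 + 2 * z := by linarith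
      positivity
    linarith

/-- The paraboloid `R² - |y - e₁|²` expanded around `x`. -/
lemma paraboloid_expand {n : ℕ} (x y e : Euc n) (R : ℝ) :
    R ^ 2 - ‖y - e‖ ^ 2 =
      (R ^ 2 - ‖x - e‖ ^ 2) + (2 * inner ℝ (x - e) (x - y) - ‖x - y‖ ^ 2) := by
  have h : y - e = (x - e) - (x - y) := by abel
  rw [h, norm_sub_sq_real]; ring

lemma exists_small_theta {s E M ω η : ℝ} (hs : 0 < s) (hω : 0 < ω) (hη : 0 < η) :
    ∃ θ, 0 < θ ∧ θ ≤ η ∧ θ ^ 2 * E + θ ^ (2 * s) * M ≤ ω := by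
  have h1 : Tendsto (fun θ : ℝ => θ ^ 2 * E + θ ^ (2 * s) * M) (𝓝[>] 0) (𝓝 0) := by
    have h2 : Continuous fun θ : ℝ => θ ^ 2 * E + θ ^ (2 * s) * M := by
      have := Real.continuous_rpow_const (q := 2 * s) (by linarith)
      fun_prop
    have h3 := h2.tendsto 0
    rw [Real.zero_rpow (by linarith)] at h3
    simp only [ne_eq, OfNat.ofNat_ne_zero, not_false_eq_true, zero_pow, zero_mul, add_zero] at h3
    exact h3.mono_left nhdsWithin_le_nhds
  have h4 := h1.eventually (eventually_le_nhds hω)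
  have h5 : ∀ᶠ θ : ℝ in 𝓝[>] 0, θ < η := nhdsWithin_le_nhds (eventually_lt_nhds hη)
  obtain ⟨θ, ha, hb, hc⟩ := (h4.and (h5.and self_mem_nhdsWithin)).exists
  exact ⟨θ, hc, hb.le, ha⟩

/-! ### The two halves of the Harnack inequality -/

set_option maxHeartbeats 800000 in
/-- Lower half: slide a paraboloid of height comparable to `u(x₁)` under `u`. -/
lemma harnack_lower (n : ℕ) [NeZero n] {s : ℝ} (hs : 0 < s) (hs1 : s < 1) {ρ : ℝ} (hρ : 0 < ρ)
    (hρ1 : ρ < 1) (K : ℝ) :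
    ∃ C > 0, ∀ c u : Euc n → ℝ, (∀ x ∈ ball (e1 n) ρ, |c x| ≤ K) →
      ContinuousOn u (ball (e1 n) ρ) → MemA n s u → (∀ x ∈ halfSpace n, 0 ≤ u x) →
      (∀ x ∈ ball (e1 n) ρ, HasAntiFracLap n s u x (-(c x * u x))) →
      ∀ x ∈ ball (e1 n) (ρ / 2), ANorm n s u ≤ C * u x := by
  obtain ⟨c₁, hc₁, C₁, hC₁, H⟩ := exists_truncated_upper n hs hs1
  have hcn := cns_pos (n := n) hs hs1
  have hcn1 := cns_pos (n := 1) hs hs1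
  set k := cns 1 s / s with hk
  have hk0 : 0 < k := by positivity
  set M := cns n s * C₁ + |K| + k * 4 ^ (2 * s) with hM
  have hM0 : 0 < M := by positivity
  refine ⟨M / (cns n s * c₁) * (16 / (5 * ρ ^ 2)), by positivity, ?_⟩
  intro c u hc hcont hA hu heq x₁ hx₁
  -- it suffices to replace `u x₁` by any larger number
  have key : ∀ m', u x₁ < m' → ANorm n s u ≤ M / (cns n s * c₁) * (16 / (5 * ρ ^ 2)) * m' := by
    intro m' hm'
    have hx₁n : ‖x₁ - e1 n‖ < ρ / 2 := by rwa [mem_ball, dist_eq_norm] at hx₁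
    have hx₁H : x₁ ∈ halfSpace n := by
      have : x₁ ∈ ball (e1 n) (3 / 4) := ball_subset_ball (by linarith) hx₁
      have := (ball_e1_bounds this).1
      show 0 < x₁ 0
      linarith
    have hm'0 : 0 < m' := (hu x₁ hx₁H).trans_lt hm'
    set m := 16 / (5 * ρ ^ 2) * m' with hm
    have hm0 : 0 < m := by positivity
    set R := 3 * ρ / 4 with hR
    set g : Euc n → ℝ := fun y => R ^ 2 - ‖y - e1 n‖ ^ 2 with hg
    have hsubρ : closedBall (e1 n) R ⊆ ball (e1 n) ρ := closedBall_subset_ball (by linarith)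
    obtain ⟨x, hxB, hxmin⟩ := (isCompact_closedBall (e1 n) R).exists_isMinOn
      (f := fun y => u y - m * g y) ⟨x₁, ball_subset_closedBall (ball_subset_ball (by linarith) hx₁)⟩
      ((hcont.mono hsubρ).sub (by fun_prop))
    have hneg : u x - m * g x < 0 := by
      have h1 : u x - m * g x ≤ u x₁ - m * g x₁ :=
        hxmin (ball_subset_closedBall (ball_subset_ball (by linarith) hx₁))
      have h2 : 5 * ρ ^ 2 / 16 ≤ g x₁ := by
        have : ‖x₁ - e1 n‖ ^ 2 ≤ (ρ / 2) ^ 2 := by gcongr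
        simp only [hg, hR]; nlinarith
      have h3 : m * (5 * ρ ^ 2 / 16) ≤ m * g x₁ := by gcongr
      have h4 : m * (5 * ρ ^ 2 / 16) = m' := by rw [hm]; field_simp
      linarith
    have hxn : ‖x - e1 n‖ ≤ R := by rwa [mem_closedBall, dist_eq_norm] at hxB
    have hx34 : x ∈ ball (e1 n) (3 / 4) := by
      rw [mem_ball, dist_eq_norm]; linarith
    obtain ⟨hx0, hx2⟩ := ball_e1_bounds hx34
    have hux : 0 ≤ u x := hu x (show 0 < x 0 by linarith)
    have hg1 : g x ≤ 1 := by
      have : 0 ≤ ‖x - e1 n‖ ^ 2 := by positivity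
      have hR1 : R ^ 2 ≤ 1 := pow_le_one₀ (by linarith) (by linarith)
      simp only [hg]; linarith
    have hum : u x ≤ m := by
      have : m * g x ≤ m * 1 := by gcongr
      linarith
    have hb : ‖(2 : ℝ) • (x - e1 n)‖ ≤ 2 := by
      rw [norm_smul, Real.norm_of_nonneg (by norm_num)]; linarith
    have htouch : ∀ y ∈ ball x (1 / 8),
        u x + m * (inner ℝ ((2 : ℝ) • (x - e1 n)) (x - y) - ‖x - y‖ ^ 2) ≤ u y := by
      intro y hy
      rw [inner_smul_left]
      simp only [conj_trivial]
      have hexp : g y = g x + (2 * inner ℝ (x - e1 n) (x - y) - ‖x - y‖ ^ 2) :=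
        paraboloid_expand x y (e1 n) R
      have h1 : u x - m * g x ≤ u y - m * g y := by
        by_cases hyR : y ∈ closedBall (e1 n) R
        · exact hxmin hyR
        · have hyH : y ∈ halfSpace n := by
            have := (coord_near (norm_sub_lt_of_mem hy)).1
            show 0 < y 0
            linarith
          have h2 : R ≤ ‖y - e1 n‖ := by
            rw [mem_closedBall, dist_eq_norm] at hyR; linarith
          have h3 : g y ≤ 0 := by
            have : R ^ 2 ≤ ‖y - e1 n‖ ^ 2 := by gcongr
            simp only [hg]; linarith
          have h4 := hu y hyH
          have h5 : m * g y ≤ 0 := mul_nonpos_of_nonneg_of_nonpos hm0.le h3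
          linarith
      rw [hexp] at h1
      linarith
    have hfin := H u hA hu x hx34 _ m hm0.le hb hum htouch
    have hlim := heq x (hsubρ hxB)
    have hlim2 : Tendsto (fun ε : ℝ => cns n s * (C₁ * m -
        c₁ * ∫ y in halfSpace n \ ball x ε, wt n s y * u y) + k * u x * (x 0) ^ (-(2 * s)))
        (𝓝[>] 0) (𝓝 (cns n s * (C₁ * m - c₁ * ANorm n s u) + k * u x * (x 0) ^ (-(2 * s)))) :=
      ((tendsto_const_nhds.sub ((tendsto_mass hA hu x).const_mul c₁)).const_mul _).add
        tendsto_const_nhds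
    have hle : -(c x * u x) ≤
        cns n s * (C₁ * m - c₁ * ANorm n s u) + k * u x * (x 0) ^ (-(2 * s)) := by
      refine le_of_tendsto_of_tendsto hlim hlim2 ?_
      have h5 : ∀ᶠ ε : ℝ in 𝓝[>] 0, ε < 1 / 8 :=
        nhdsWithin_le_nhds (eventually_lt_nhds (by norm_num))
      filter_upwards [h5, self_mem_nhdsWithin] with ε hε1 hε0
      have := hfin ε hε0 hε1.le
      gcongr
    have hxs : (x 0) ^ (-(2 * s)) ≤ 4 ^ (2 * s) := by
      calc (x 0) ^ (-(2 * s)) ≤ (1 / 4 : ℝ) ^ (-(2 * s)) :=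
            Real.rpow_le_rpow_of_nonpos (by norm_num) hx0.le (by linarith)
        _ = _ := by
          rw [one_div, Real.inv_rpow (by norm_num), ← Real.rpow_neg (by norm_num), neg_neg]
    have hcx : c x * u x ≤ |K| * m := by
      have h1 := (le_abs_self _).trans ((hc x (hsubρ hxB)).trans (le_abs_self K))
      exact mul_le_mul h1 hum hux (abs_nonneg _)
    have hkx : k * u x * (x 0) ^ (-(2 * s)) ≤ k * m * 4 ^ (2 * s) := by gcongr
    have hend : cns n s * c₁ * ANorm n s u ≤ M * m := by
      rw [hM]; linarith
    calc ANorm n s u ≤ M * m / (cns n s * c₁) := by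
          rw [le_div_iff₀ (by positivity)]; linarith
      _ = _ := by rw [hm]; ring
  -- let the larger number decrease to `u x₁`
  have hpos : 0 < M / (cns n s * c₁) * (16 / (5 * ρ ^ 2)) := by positivity
  rw [← div_le_iff₀' hpos]
  refine le_of_forall_gt_imp_ge_of_dense fun t ht => ?_
  rw [div_le_iff₀' hpos]
  exact key t ht

/-- If `u (R² - |· - e|²)ⁿ` is maximal at `x`, where the paraboloid has height `d`, then on the
ball of radius `θ d` the function `u` lies below a quadratic polynomial touching it at `x`. -/
lemma quadratic_above_of_max {n : ℕ} {u : Euc n → ℝ} {x e : Euc n} {R C d θ : ℝ} (hC : 0 ≤ C)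
    (H : ∀ z : ℝ, |z| ≤ 1 / 2 → ((1 + z) ^ n)⁻¹ ≤ 1 - n * z + C * z ^ 2)
    (hR0 : 0 ≤ R) (hR1 : R ≤ 1) (hx : ‖x - e‖ ≤ R) (hd : d = R ^ 2 - ‖x - e‖ ^ 2) (hd0 : 0 < d)
    (hd1 : d ≤ 1) (hθ : θ ≤ 1 / 8) (hux : 0 ≤ u x)
    (hmax : ∀ y ∈ closedBall e R, u y * (R ^ 2 - ‖y - e‖ ^ 2) ^ n ≤ u x * d ^ n)
    {y : Euc n} (hy : y ∈ ball x (θ * d)) :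
    u y ≤ u x * (1 + inner ℝ ((-(2 * n / d)) • (x - e)) (x - y) +
      (n + 9 * C) / d ^ 2 * ‖x - y‖ ^ 2) := by
  have hyn := norm_sub_lt_of_mem hy
  have hexp := paraboloid_expand x y e R
  rw [← hd] at hexp
  set I : ℝ := inner ℝ (x - e) (x - y) with hI
  set N := ‖x - y‖ with hN
  have hN0 : 0 ≤ N := norm_nonneg _
  have hN1 : N ≤ 1 := by nlinarith
  have hIle : |I| ≤ N := by
    have h1 := abs_real_inner_le_norm (x - e) (x - y)
    have h2 : ‖x - e‖ * N ≤ 1 * N := by gcongr; linarith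
    linarith
  obtain ⟨hIa, hIb⟩ := abs_le.1 hIle
  set z := (2 * I - N ^ 2) / d with hz
  have hzd : d * z = 2 * I - N ^ 2 := by rw [hz]; field_simp
  have habs : |2 * I - N ^ 2| ≤ 3 * N := by
    rw [abs_le]; constructor <;> nlinarith
  have hzle : |z| ≤ 3 * N / d := by
    rw [hz, abs_div, abs_of_pos hd0]; gcongr
  have hz2 : |z| ≤ 1 / 2 := by
    refine hzle.trans ?_
    rw [div_le_iff₀ hd0]; nlinarith
  have hzsq : z ^ 2 ≤ 9 * N ^ 2 / d ^ 2 := by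
    have h1 : |z| ^ 2 ≤ (3 * N / d) ^ 2 := by gcongr
    rw [sq_abs] at h1
    refine h1.trans (le_of_eq ?_)
    ring
  have hz1 : 0 < 1 + z := by have := (abs_le.1 hz2).1; linarith
  have hgy : R ^ 2 - ‖y - e‖ ^ 2 = d * (1 + z) := by rw [hexp]; linarith
  have hyR : y ∈ closedBall e R := by
    rw [mem_closedBall, dist_eq_norm]
    have : 0 < d * (1 + z) := by positivity
    exact le_of_sq_le_sq (by linarith) hR0
  have h1 := hmax y hyR
  rw [hgy, mul_pow] at h1
  have h2 : u y ≤ u x * ((1 + z) ^ n)⁻¹ := by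
    rw [← div_eq_mul_inv, le_div_iff₀ (by positivity)]
    have : 0 < d ^ n := by positivity
    nlinarith
  refine h2.trans (mul_le_mul_of_nonneg_left ((H z hz2).trans ?_) hux)
  rw [inner_smul_left]
  simp only [conj_trivial]
  rw [← hI]
  have h3 : C * z ^ 2 ≤ C * (9 * N ^ 2 / d ^ 2) := by gcongr
  have h4 : (n : ℝ) * (N ^ 2 / d) ≤ n * (N ^ 2 / d ^ 2) := by
    have : d ^ 2 ≤ d := by nlinarith
    gcongr
  have h5 : (n : ℝ) * z = 2 * n / d * I - n * (N ^ 2 / d) := by rw [hz]; ring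
  have h6 : (n + 9 * C) / d ^ 2 * N ^ 2 = n * (N ^ 2 / d ^ 2) + C * (9 * N ^ 2 / d ^ 2) := by ring
  linarith

/-- Absorption at scale `r = θ d`: multiplying by `r^{2s}` turns the good term into a constant
and makes every other multiple of `U` small with `θ`. -/
lemma absorb_scale {n : ℕ} {s U ω d θ A D P Q C a : ℝ} (hs : 0 < s) (hU : 0 ≤ U) (hω : 0 < ω)
    (hd0 : 0 < d) (hd1 : d ≤ 1) (hθ0 : 0 < θ) (hP : 0 ≤ P) (hQ : 0 ≤ Q)
    (hθ : θ ^ 2 * (A * D) + θ ^ (2 * s) * (P + Q) ≤ ω / 8)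
    (h : U * (3 / 8 * ω * (θ * d) ^ (-(2 * s)) - A / d ^ 2 * ((θ * d) ^ (2 - 2 * s) * D) - P) -
      C * (θ * d) ^ (-((n : ℝ) + 2 * s)) * a ≤ Q * U) :
    U * d ^ n ≤ 4 * C / (ω * θ ^ n) * a := by
  have hr : 0 < θ * d := by positivity
  set t := (θ * d) ^ (2 * s) with ht
  have ht0 : 0 < t := by positivity
  have e1 : (θ * d) ^ (-(2 * s)) = t⁻¹ := Real.rpow_neg hr.le _
  have e2 : (θ * d) ^ (2 - 2 * s) = (θ * d) ^ 2 / t := by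
    rw [Real.rpow_sub hr]; norm_cast
  have e3 : (θ * d) ^ (-((n : ℝ) + 2 * s)) = ((θ * d) ^ n * t)⁻¹ := by
    rw [Real.rpow_neg hr.le, Real.rpow_add hr, Real.rpow_natCast]
  have htθ : t ≤ θ ^ (2 * s) := by
    rw [ht, Real.mul_rpow hθ0.le hd0.le]
    exact mul_le_of_le_one_right (by positivity) (Real.rpow_le_one hd0.le hd1 (by linarith))
  rw [e1, e2, e3] at h
  have h1 := mul_le_mul_of_nonneg_right h ht0.le
  have h2 : (U * (3 / 8 * ω * t⁻¹ - A / d ^ 2 * ((θ * d) ^ 2 / t * D) - P) -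
      C * ((θ * d) ^ n * t)⁻¹ * a) * t =
      U * (3 / 8 * ω - θ ^ 2 * (A * D) - P * t) - C * a / (θ ^ n * d ^ n) := by
    rw [mul_pow, mul_pow]; field_simp
  rw [h2] at h1
  have h3 : t * (P + Q) ≤ θ ^ (2 * s) * (P + Q) := by gcongr
  have h4 : U * (θ ^ 2 * (A * D) + t * (P + Q)) ≤ U * (ω / 8) := by gcongr; linarith
  have h5 : U * (ω / 4) ≤ C * a / (θ ^ n * d ^ n) := by linarith
  rw [le_div_iff₀ (by positivity)] at h5
  rw [div_mul_eq_mul_div, le_div_iff₀ (by positivity)]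
  linarith

set_option maxHeartbeats 800000 in
/-- Upper half: at a maximum point of `u (R² - |· - e₁|²)ⁿ` the operator controls `u` from above
by the mass, with a loss that the weight compensates exactly. -/
lemma harnack_upper (n : ℕ) [NeZero n] {s : ℝ} (hs : 0 < s) (hs1 : s < 1) {ρ : ℝ} (hρ : 0 < ρ)
    (hρ1 : ρ < 1) (K : ℝ) :
    ∃ C > 0, ∀ c u : Euc n → ℝ, (∀ x ∈ ball (e1 n) ρ, |c x| ≤ K) →
      ContinuousOn u (ball (e1 n) ρ) → MemA n s u → (∀ x ∈ halfSpace n, 0 ≤ u x) →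
      (∀ x ∈ ball (e1 n) ρ, HasAntiFracLap n s u x (-(c x * u x))) →
      ∀ x ∈ ball (e1 n) (ρ / 2), u x ≤ C * ANorm n s u := by
  obtain ⟨C₁, hC₁, H⟩ := exists_truncated_lower n hs hs1
  obtain ⟨Cn, hCn, Hn⟩ := exists_inv_pow_le n
  have hcn := cns_pos (n := n) hs hs1
  have hcn1 := cns_pos (n := 1) hs hs1
  have hn : (0 : ℝ) < n := by exact_mod_cast Nat.pos_of_ne_zero (NeZero.ne n)
  set ω := volume.real (ball (0 : Euc n) 1) with hω
  have hω0 : 0 < ω := ENNReal.toReal_pos (measure_ball_pos _ _ one_pos).ne' measure_ball_lt_top.ne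
  set D := ∫ h in ball (0 : Euc n) 1, ‖h‖ ^ (2 - ((n : ℝ) + 2 * s)) with hD
  set P := 4 ^ ((n : ℝ) + 2 * s) * ω with hP
  set Q := |K| / cns n s with hQ
  have hP0 : 0 ≤ P := by positivity
  have hQ0 : 0 ≤ Q := by positivity
  obtain ⟨θ, hθ0, hθη, hθ⟩ := exists_small_theta (s := s) (E := (n + 9 * Cn) * D) (M := P + Q)
    (ω := ω / 8) (η := min (1 / 8) (1 / (8 * n))) hs (by positivity) (by positivity)
  have hθ8 : θ ≤ 1 / 8 := hθη.trans (min_le_left _ _)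
  have hθn : 8 * n * θ ≤ 1 := by
    have := hθη.trans (min_le_right _ _)
    rw [le_div_iff₀ (by positivity)] at this
    linarith
  set B := 4 * C₁ / (ω * θ ^ n) with hB
  have hB0 : 0 < B := by positivity
  refine ⟨B / (5 * ρ ^ 2 / 16) ^ n, by positivity, ?_⟩
  intro c u hc hcont hA hu heq x₁ hx₁
  have hx₁n : ‖x₁ - e1 n‖ < ρ / 2 := by rwa [mem_ball, dist_eq_norm] at hx₁
  have ha := ANorm_nonneg (s := s) hu
  set R := 3 * ρ / 4 with hR
  set g : Euc n → ℝ := fun y => R ^ 2 - ‖y - e1 n‖ ^ 2 with hg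
  have hsubρ : closedBall (e1 n) R ⊆ ball (e1 n) ρ := closedBall_subset_ball (by linarith)
  have hx₁B : x₁ ∈ closedBall (e1 n) R :=
    ball_subset_closedBall (ball_subset_ball (by linarith) hx₁)
  have hx₁H : x₁ ∈ halfSpace n := by
    have : x₁ ∈ ball (e1 n) (3 / 4) := ball_subset_ball (by linarith) hx₁
    have := (ball_e1_bounds this).1
    show 0 < x₁ 0
    linarith
  have hg₁ : 5 * ρ ^ 2 / 16 ≤ g x₁ := by
    have : ‖x₁ - e1 n‖ ^ 2 ≤ (ρ / 2) ^ 2 := by gcongr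
    simp only [hg, hR]; nlinarith
  obtain ⟨x, hxB, hxmax⟩ := (isCompact_closedBall (e1 n) R).exists_isMaxOn
    (f := fun y => u y * g y ^ n) ⟨x₁, hx₁B⟩ ((hcont.mono hsubρ).mul (by fun_prop))
  have hmain : u x * g x ^ n ≤ B * ANorm n s u := by
    have hxn : ‖x - e1 n‖ ≤ R := by rwa [mem_closedBall, dist_eq_norm] at hxB
    have hx34 : x ∈ ball (e1 n) (3 / 4) := by
      rw [mem_ball, dist_eq_norm]; linarith
    obtain ⟨hx0, -⟩ := ball_e1_bounds hx34
    have hux : 0 ≤ u x := hu x (show 0 < x 0 by linarith)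
    have hd0 : 0 ≤ g x := by
      have : ‖x - e1 n‖ ^ 2 ≤ R ^ 2 := by gcongr
      simp only [hg]; linarith
    have hd1 : g x ≤ 1 := by
      have : 0 ≤ ‖x - e1 n‖ ^ 2 := by positivity
      have hR1 : R ^ 2 ≤ 1 := pow_le_one₀ (by linarith) (by linarith)
      simp only [hg]; linarith
    rcases hd0.eq_or_lt with h0 | hdpos
    · rw [← h0, zero_pow (NeZero.ne n), mul_zero]; positivity
    generalize hd : g x = d at *
    have hr0 : 0 < θ * d := by positivity
    have hr8 : θ * d ≤ 1 / 8 := by nlinarith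
    have hb : ‖(-(2 * n / d)) • (x - e1 n)‖ * (θ * d) ≤ 1 / 4 := by
      rw [norm_smul, norm_neg, Real.norm_of_nonneg (by positivity)]
      have h1 : ‖x - e1 n‖ ≤ 1 := by linarith
      calc 2 * n / d * ‖x - e1 n‖ * (θ * d) = 2 * n * θ * ‖x - e1 n‖ := by field_simp
        _ ≤ 2 * n * θ * 1 := by gcongr
        _ ≤ 1 / 4 := by linarith
    have htouch := fun y hy => quadratic_above_of_max (y := y) hCn Hn (by linarith)
      (by linarith) hxn hd.symm hdpos hd1 hθ8 hux
      (fun y hy => by rw [← hd]; exact hxmax hy) hy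
    have hfin := H u hA hu x hx34 _ hr0 hr8 _ ((n + 9 * Cn) / d ^ 2) (by positivity) hb htouch
    refine absorb_scale hs hux hω0 hdpos hd1 hθ0 hP0 hQ0 hθ ?_
    have hlim := heq x (hsubρ hxB)
    have hkx : 0 ≤ cns 1 s / s * u x * (x 0) ^ (-(2 * s)) := by
      have : 0 < x 0 := by linarith
      positivity
    set T := u x * (3 / 8 * ω * (θ * d) ^ (-(2 * s)) -
      (n + 9 * Cn) / d ^ 2 * ((θ * d) ^ (2 - 2 * s) * D) - P) -
      C₁ * (θ * d) ^ (-((n : ℝ) + 2 * s)) * ANorm n s u with hT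
    have hge : cns n s * T ≤ -(c x * u x) := by
      refine ge_of_tendsto hlim ?_
      have h5 : ∀ᶠ ε : ℝ in 𝓝[>] 0, ε < θ * d / 2 :=
        nhdsWithin_le_nhds (eventually_lt_nhds (by positivity))
      filter_upwards [h5, self_mem_nhdsWithin] with ε hε1 hε0
      have h6 := mul_le_mul_of_nonneg_left (hfin ε hε0 hε1.le) hcn.le
      linarith
    have hcx : -(c x * u x) ≤ |K| * u x := by
      have h1 := (neg_le_abs _).trans ((hc x (hsubρ hxB)).trans (le_abs_self K))
      have := mul_le_mul_of_nonneg_right h1 hux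
      linarith
    rw [hQ, div_mul_eq_mul_div, le_div_iff₀ hcn]
    linarith
  have h1 : u x₁ * g x₁ ^ n ≤ u x * g x ^ n := hxmax hx₁B
  have h2 : u x₁ * (5 * ρ ^ 2 / 16) ^ n ≤ u x₁ * g x₁ ^ n := by
    have := hu x₁ hx₁H
    gcongr
  rw [div_mul_eq_mul_div, le_div_iff₀ (by positivity)]
  linarith

/-- the interior Harnack inequality (Theorem 1.2). -/
theorem stmt1
    (n : ℕ) [NeZero n] (s : ℝ) (hs : s ∈ Set.Ioo (0 : ℝ) 1)
    (ρ : ℝ) (hρ : ρ ∈ Set.Ioo (0 : ℝ) 1) (K : ℝ) :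
    ∃ C : ℝ, 1 ≤ C ∧
      ∀ (c u : Euc n → ℝ) (α : ℝ),
        0 < α → NotInteger (2 * s + α) →
        (∀ x ∈ Metric.ball (e1 n) ρ, |c x| ≤ K) →
        MemHolderOn (2 * s + α) (Metric.ball (e1 n) ρ) u →
        MemA n s u →
        (∀ x ∈ halfSpace n, 0 ≤ u x) →
        (∀ x ∈ Metric.ball (e1 n) ρ, HasAntiFracLap n s u x (-(c x * u x))) →
        (∀ x ∈ Metric.ball (e1 n) (ρ / 2), ∀ y ∈ Metric.ball (e1 n) (ρ / 2),
          u x ≤ C * u y) ∧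
        (∀ x ∈ Metric.ball (e1 n) (ρ / 2),
          C⁻¹ * ANorm n s u ≤ u x ∧ u x ≤ C * ANorm n s u) := by
  obtain ⟨Cl, hCl, Hl⟩ := harnack_lower n hs.1 hs.2 hρ.1 hρ.2 K
  obtain ⟨Cu, hCu, Hu⟩ := harnack_upper n hs.1 hs.2 hρ.1 hρ.2 K
  have hp : 0 < Cu * Cl := mul_pos hCu hCl
  refine ⟨1 + Cl + Cu + Cu * Cl, by linarith, ?_⟩
  intro c u α _ _ hc hH hA hu heq
  have hl := Hl c u hc hH.1.continuousOn hA hu heq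
  have hup := Hu c u hc hH.1.continuousOn hA hu heq
  have ha := ANorm_nonneg (s := s) hu
  have hpos : ∀ x ∈ ball (e1 n) (ρ / 2), 0 ≤ u x := fun x hx => by
    have h := (ball_e1_bounds (ball_subset_ball (by linarith [hρ.2]) hx)).1
    exact hu x (show 0 < x 0 by linarith)
  refine ⟨fun x hx y hy => ?_, fun x hx => ⟨?_, ?_⟩⟩
  · have h1 := mul_le_mul_of_nonneg_left (hl y hy) hCu.le
    have h2 := mul_nonneg (show 0 ≤ 1 + Cl + Cu by linarith) (hpos y hy)
    linarith [hup x hx]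
  · rw [inv_mul_le_iff₀ (by linarith)]
    have h2 := mul_nonneg (show 0 ≤ 1 + Cu + Cu * Cl by linarith) (hpos x hx)
    linarith [hl x hx]
  · have h2 := mul_nonneg (show 0 ≤ 1 + Cl + Cu * Cl by linarith) ha
    linarith [hup x hx]

end
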